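/- Let A be a real n×m matrix with columns a₁, …, a_m ∈ ℝⁿ, and let λ₁ ≥ λ₂ ≥ … ≥ λ_n ≥ 0 denote the eigenvalues of A Aᵀ listed with multiplicity in decreasing order. Suppose S₁, …, S_k ∈ ℝⁿ form an orthonormal family with A Aᵀ S_i = λ_i S_i for i = 1, …, k. Then Σ_{j=1}^{m} ‖ a_j − Σ_{i=1}^{k} ⟨S_i, a_j⟩ S_i ‖² = Σ_{i=k+1}^{n} λ_i. -/

import Mathlib

open Matrix
open scoped RealInnerProductSpace

/-- The squared distance from `x` to its projection on the span of an orthonormal family. -/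
theorem norm_sub_sum_inner_smul_sq {E ι : Type*} [NormedAddCommGroup E] [InnerProductSpace ℝ E]
    [Fintype ι] {S : ι → E} (hS : Orthonormal ℝ S) (x : E) :
    ‖x - ∑ i, ⟪S i, x⟫ • S i‖ ^ 2 = ‖x‖ ^ 2 - ∑ i, ⟪S i, x⟫ ^ 2 := by
  have hcross : ⟪x, ∑ i, ⟪S i, x⟫ • S i⟫ = ∑ i, ⟪S i, x⟫ ^ 2 := by
    simp only [inner_sum, real_inner_smul_right, real_inner_comm x, sq]
  have hproj : ‖∑ i, ⟪S i, x⟫ • S i‖ ^ 2 = ∑ i, ⟪S i, x⟫ ^ 2 := by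
    rw [← real_inner_self_eq_norm_sq, hS.inner_sum]
    simp [sq]
  rw [norm_sub_sq_real, hcross, hproj]
  ring

/-- The squared norms of the columns of `A` sum to the trace of `A Aᵀ`. -/
theorem sum_norm_sq_col_eq_trace {ι κ : Type*} [Fintype ι] [Fintype κ] {A : Matrix ι κ ℝ}
    {a : κ → EuclideanSpace ℝ ι} (ha : ∀ j i, a j i = A i j) :
    ∑ j, ‖a j‖ ^ 2 = (A * Aᵀ).trace := by
  simp only [EuclideanSpace.real_norm_sq_eq, ha, Matrix.trace, Matrix.diag_apply,
    Matrix.mul_apply, Matrix.transpose_apply, ← sq]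
  exact Finset.sum_comm

/-- The squared inner products of `v` with the columns of `A` sum to the quadratic form of
`A Aᵀ` at `v`. -/
theorem sum_inner_col_sq_eq_dotProduct {ι κ : Type*} [Fintype ι] [Fintype κ] {A : Matrix ι κ ℝ}
    {a : κ → EuclideanSpace ℝ ι} (ha : ∀ j i, a j i = A i j) (v : EuclideanSpace ℝ ι) :
    ∑ j, ⟪v, a j⟫ ^ 2 = v ⬝ᵥ (A * Aᵀ) *ᵥ v := by
  have hinner : ∀ j, ⟪v, a j⟫ = (v ᵥ* A) j := fun j => by
    simp [PiLp.inner_apply, Matrix.vecMul, dotProduct, ha, mul_comm]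
  rw [← Matrix.mulVec_mulVec, Matrix.dotProduct_mulVec, Matrix.mulVec_transpose]
  simp only [hinner, dotProduct, sq]

/-- POD achievability: if `S₁, …, S_k` are orthonormal eigenvectors of `A Aᵀ`
for the `k` largest eigenvalues, the snapshot projection error equals the
tail sum `Σ_{i>k} λ_i` of the decreasingly ordered eigenvalues of `A Aᵀ`. -/
theorem pod_projection_error_of_top_eigenvectors
    (n m : ℕ) (A : Matrix (Fin n) (Fin m) ℝ)
    (hA : (A * Aᵀ).IsHermitian)
    (lam : Fin n → ℝ)
    (hdec : Antitone lam)
    (hnonneg : ∀ i, 0 ≤ lam i)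
    (hperm : ∃ σ : Equiv.Perm (Fin n), ∀ i, lam i = hA.eigenvalues (σ i))
    (k : ℕ) (hk : k ≤ n)
    (S : Fin k → EuclideanSpace ℝ (Fin n))
    (hS : Orthonormal ℝ S)
    (heig : ∀ i : Fin k, (A * Aᵀ) *ᵥ (S i) = lam (Fin.castLE hk i) • (S i))
    (a : Fin m → EuclideanSpace ℝ (Fin n))
    (ha : ∀ j i, a j i = A i j) :
    ∑ j : Fin m, ‖a j - ∑ i : Fin k, ⟪S i, a j⟫ • S i‖ ^ 2
      = ∑ i ∈ Finset.univ.filter (fun i : Fin n => k ≤ (i : ℕ)), lam i := by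
  obtain ⟨σ, hσ⟩ := hperm
  have htrace : (A * Aᵀ).trace = ∑ i, lam i := by
    simp only [hA.trace_eq_sum_eigenvalues, hσ, RCLike.ofReal_real_eq_id, id_eq]
    exact (Equiv.sum_comp σ hA.eigenvalues).symm
  have hquad : ∀ i, ∑ j, ⟪S i, a j⟫ ^ 2 = lam (Fin.castLE hk i) := fun i => by
    have hone : (S i) ⬝ᵥ (S i) = (1 : ℝ) := by
      have hnorm := EuclideanSpace.real_norm_sq_eq (S i)
      rw [hS.norm_eq_one, one_pow] at hnorm
      simp only [dotProduct, ← sq, ← hnorm]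
    rw [sum_inner_col_sq_eq_dotProduct ha, heig, dotProduct_smul, hone, smul_eq_mul, mul_one]
  have hhead : ∑ i : Fin k, lam (Fin.castLE hk i)
      = ∑ i ∈ Finset.univ.filter (fun i : Fin n => ¬ k ≤ (i : ℕ)), lam i := by
    refine Finset.sum_bij (fun i _ => Fin.castLE hk i) (by simp) (by simp) ?_ (by simp)
    intro i hi
    exact ⟨⟨i, by simpa using hi⟩, Finset.mem_univ _, rfl⟩
  simp only [norm_sub_sum_inner_smul_sq hS, Finset.sum_sub_distrib]
  rw [sum_norm_sq_col_eq_trace ha, htrace, Finset.sum_comm]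
  simp only [hquad]
  rw [hhead, sub_eq_iff_eq_add, Finset.sum_filter_add_sum_filter_not]
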